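/- Let H be a complex separable Hilbert space, let T be a state operator on H and let E be an effect on H. Then tr[T E] = 1 if and only if E T = T. -/

import Mathlib

open scoped ComplexInnerProductSpace

/-- The trace of a (trace-class) operator computed along a Hilbert basis. -/
noncomputable def trAlong {H : Type*} [NormedAddCommGroup H] [InnerProductSpace ℂ H]
    {ι : Type*} (b : HilbertBasis ι ℂ H) (A : H →L[ℂ] H) : ℂ :=
  ∑' i, ⟪b i, A (b i)⟫

/-- A state operator: a positive trace-class operator with trace one. -/
def IsStateOperator {H : Type*} [NormedAddCommGroup H] [InnerProductSpace ℂ H]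
    [CompleteSpace H] {ι : Type*} (b : HilbertBasis ι ℂ H) (T : H →L[ℂ] H) : Prop :=
  T.IsPositive ∧ Summable (fun i => ⟪b i, T (b i)⟫) ∧ trAlong b T = 1

/-- An effect: a bounded self-adjoint operator `E` with `0 ≤ E ≤ 1`. -/
def IsEffect {H : Type*} [NormedAddCommGroup H] [InnerProductSpace ℂ H]
    [CompleteSpace H] (E : H →L[ℂ] H) : Prop :=
  E.IsPositive ∧ (1 - E).IsPositive

/-!
For `T ≥ 0` trace-class, `√T` is Hilbert–Schmidt, so cyclicity of the trace applies to
`T F = √T (√T F)` and gives, for `F ≥ 0`, `tr[T F] = tr[√T F √T] = ∑ᵢ ‖√F √T bᵢ‖²`. Hence `tr[T F]`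
vanishes only if `√F √T = 0`, that is, only if `F T = 0`. Take `F = 1 - E`: `tr[T E] = tr[T]` says
that `tr[T F] = 0`, and `E T = T` says that `F T = 0`.
-/

section HilbertSchmidt

open scoped InnerProductSpace

variable {𝕜 H K L : Type*} [RCLike 𝕜]
  [NormedAddCommGroup H] [InnerProductSpace 𝕜 H]
  [NormedAddCommGroup K] [InnerProductSpace 𝕜 K]
  [NormedAddCommGroup L] [InnerProductSpace 𝕜 L]
  {ι κ : Type*}

theorem hasSum_norm_sq_inner_right (b : HilbertBasis ι 𝕜 H) (x : H) :
    HasSum (fun i => ‖⟪b i, x⟫_𝕜‖ ^ 2) (‖x‖ ^ 2) := by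
  have h := RCLike.hasSum_re 𝕜 (b.hasSum_inner_mul_inner x x)
  simp_rw [inner_mul_symm_re_eq_norm, norm_mul, norm_inner_symm x, ← sq] at h
  rwa [inner_self_eq_norm_sq] at h

/-- `A` is a Hilbert–Schmidt operator, tested on the Hilbert basis `b` of its domain: the squared
norms `‖A (b i)‖ ^ 2` are summable. It makes the double series behind the cyclicity of the trace
absolutely convergent. -/
def IsHilbertSchmidtAlong (b : HilbertBasis ι 𝕜 H) (A : H →L[𝕜] K) : Prop :=
  Summable fun i => ‖A (b i)‖ ^ 2

theorem isHilbertSchmidtAlong_iff_summable_norm_sq_inner (b : HilbertBasis ι 𝕜 H)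
    (c : HilbertBasis κ 𝕜 K) (A : H →L[𝕜] K) :
    IsHilbertSchmidtAlong b A ↔ Summable fun p : ι × κ => ‖⟪c p.2, A (b p.1)⟫_𝕜‖ ^ 2 := by
  have parseval (i : ι) := hasSum_norm_sq_inner_right c (A (b i))
  rw [summable_prod_of_nonneg fun _ => sq_nonneg _]
  simp only [(parseval _).tsum_eq, (parseval _).summable, implies_true, true_and,
    IsHilbertSchmidtAlong]

namespace IsHilbertSchmidtAlong

theorem adjoint [CompleteSpace H] [CompleteSpace K] {b : HilbertBasis ι 𝕜 H} {A : H →L[𝕜] K}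
    (hA : IsHilbertSchmidtAlong b A) (c : HilbertBasis κ 𝕜 K) :
    IsHilbertSchmidtAlong c A.adjoint := by
  rw [isHilbertSchmidtAlong_iff_summable_norm_sq_inner b c] at hA
  rw [isHilbertSchmidtAlong_iff_summable_norm_sq_inner c b]
  simpa only [Function.comp_def, Equiv.prodComm_apply, Prod.fst_swap, Prod.snd_swap,
    ContinuousLinearMap.adjoint_inner_right, norm_inner_symm] using
    (Equiv.prodComm κ ι).summable_iff.2 hA

theorem clm_comp {b : HilbertBasis ι 𝕜 H} {A : H →L[𝕜] K} (hA : IsHilbertSchmidtAlong b A)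
    (B : K →L[𝕜] L) : IsHilbertSchmidtAlong b (B ∘L A) := by
  refine (hA.mul_left (‖B‖ ^ 2)).of_nonneg_of_le (fun _ => sq_nonneg _) fun i => ?_
  rw [← mul_pow]
  gcongr
  exact B.le_opNorm (A (b i))

theorem comp_clm [CompleteSpace H] [CompleteSpace K] [CompleteSpace L]
    {c : HilbertBasis κ 𝕜 K} {A : K →L[𝕜] L} (hA : IsHilbertSchmidtAlong c A)
    (b : HilbertBasis ι 𝕜 H) (B : H →L[𝕜] K) : IsHilbertSchmidtAlong b (A ∘L B) := by
  obtain ⟨_, d, -⟩ := exists_hilbertBasis 𝕜 L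
  simpa only [ContinuousLinearMap.adjoint_comp, ContinuousLinearMap.adjoint_adjoint] using
    ((hA.adjoint d).clm_comp B.adjoint).adjoint b

theorem tsum_norm_sq_eq_zero_iff {b : HilbertBasis ι 𝕜 H} {A : H →L[𝕜] K}
    (hA : IsHilbertSchmidtAlong b A) : ∑' i, ‖A (b i)‖ ^ 2 = 0 ↔ A = 0 := by
  refine ⟨fun h => ?_, fun h => by simp [h]⟩
  have apply_basis : ∀ i, ‖A (b i)‖ ^ 2 = 0 := congrFun <|
    (hasSum_zero_iff_of_nonneg fun _ => sq_nonneg _).1 (h ▸ hA.hasSum)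
  refine ContinuousLinearMap.ext_on
    (Submodule.dense_iff_topologicalClosure_eq_top.2 b.dense_span) ?_
  rintro _ ⟨i, rfl⟩
  simpa using apply_basis i

variable {b : HilbertBasis ι 𝕜 H} {c : HilbertBasis κ 𝕜 K} {A : K →L[𝕜] H} {B : H →L[𝕜] K}

theorem summable_inner_mul_inner (hA : IsHilbertSchmidtAlong c A)
    (hB : IsHilbertSchmidtAlong b B) :
    Summable fun p : ι × κ => ⟪b p.1, A (c p.2)⟫_𝕜 * ⟪c p.2, B (b p.1)⟫_𝕜 := by
  rw [isHilbertSchmidtAlong_iff_summable_norm_sq_inner c b] at hA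
  rw [isHilbertSchmidtAlong_iff_summable_norm_sq_inner b c] at hB
  refine Summable.of_norm_bounded (((Equiv.prodComm ι κ).summable_iff.2 hA).add hB) fun p => ?_
  rw [norm_mul]
  simp only [Function.comp_apply, Equiv.prodComm_apply, Prod.fst_swap, Prod.snd_swap]
  linarith [two_mul_le_add_sq ‖⟪b p.1, A (c p.2)⟫_𝕜‖ ‖⟪c p.2, B (b p.1)⟫_𝕜‖,
    mul_nonneg (norm_nonneg ⟪b p.1, A (c p.2)⟫_𝕜) (norm_nonneg ⟪c p.2, B (b p.1)⟫_𝕜)]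

variable [CompleteSpace H] [CompleteSpace K]

theorem hasSum_inner_comp (hA : IsHilbertSchmidtAlong c A) (hB : IsHilbertSchmidtAlong b B) :
    HasSum (fun i => ⟪b i, (A ∘L B) (b i)⟫_𝕜)
      (∑' p : ι × κ, ⟪b p.1, A (c p.2)⟫_𝕜 * ⟪c p.2, B (b p.1)⟫_𝕜) := by
  refine (hA.summable_inner_mul_inner hB).hasSum.prod_fiberwise fun i => ?_
  simpa only [ContinuousLinearMap.adjoint_inner_left, ContinuousLinearMap.comp_apply] using
    c.hasSum_inner_mul_inner (A.adjoint (b i)) (B (b i))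

theorem tsum_inner_comp_comm (hA : IsHilbertSchmidtAlong c A) (hB : IsHilbertSchmidtAlong b B) :
    ∑' i, ⟪b i, (A ∘L B) (b i)⟫_𝕜 = ∑' j, ⟪c j, (B ∘L A) (c j)⟫_𝕜 := by
  rw [(hA.hasSum_inner_comp hB).tsum_eq, (hB.hasSum_inner_comp hA).tsum_eq,
    ← (Equiv.prodComm κ ι).tsum_eq]
  simp only [Equiv.prodComm_apply, Prod.fst_swap, Prod.snd_swap, mul_comm]

end IsHilbertSchmidtAlong

end HilbertSchmidt

section PositiveTraceClass

variable {H : Type*} [NormedAddCommGroup H] [InnerProductSpace ℂ H] [CompleteSpace H]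
  {ι : Type*} {b : HilbertBasis ι ℂ H} {T F : H →L[ℂ] H}

theorem inner_sqrt_apply_left (T : H →L[ℂ] H) (x y : H) :
    ⟪CFC.sqrt T x, y⟫ = ⟪x, CFC.sqrt T y⟫ :=
  ((ContinuousLinearMap.nonneg_iff_isPositive _).1
    (CFC.sqrt_nonneg T)).inner_left_eq_inner_right x y

theorem inner_apply_self_eq_norm_sqrt_apply_sq (hT : 0 ≤ T) (x : H) :
    ⟪x, T x⟫ = (‖CFC.sqrt T x‖ ^ 2 : ℝ) := by
  conv_lhs => rw [← CFC.sqrt_mul_sqrt_self T hT]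
  rw [mul_apply_eq_comp, ← inner_sqrt_apply_left, inner_self_eq_norm_sq_to_K]
  norm_cast

theorem isHilbertSchmidtAlong_sqrt_iff (hT : 0 ≤ T) :
    IsHilbertSchmidtAlong b (CFC.sqrt T) ↔ Summable fun i => ⟪b i, T (b i)⟫ := by
  simp only [inner_apply_self_eq_norm_sqrt_apply_sq hT, Complex.summable_ofReal,
    IsHilbertSchmidtAlong]

theorem summable_inner_mul_of_nonneg (hT : 0 ≤ T) (hTb : Summable fun i => ⟪b i, T (b i)⟫)
    (B : H →L[ℂ] H) : Summable fun i => ⟪b i, (T * B) (b i)⟫ := by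
  have hS := (isHilbertSchmidtAlong_sqrt_iff hT).2 hTb
  have h := (hS.hasSum_inner_comp (hS.comp_clm b B)).summable
  rwa [← ContinuousLinearMap.mul_def, ← ContinuousLinearMap.mul_def, ← mul_assoc,
    CFC.sqrt_mul_sqrt_self T hT] at h

theorem trAlong_mul_eq_trAlong_sqrt_mul_mul_sqrt (hT : 0 ≤ T)
    (hTb : Summable fun i => ⟪b i, T (b i)⟫) (B : H →L[ℂ] H) :
    trAlong b (T * B) = trAlong b (CFC.sqrt T * B * CFC.sqrt T) := by
  have hS := (isHilbertSchmidtAlong_sqrt_iff hT).2 hTb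
  calc trAlong b (T * B) = trAlong b (CFC.sqrt T * (CFC.sqrt T * B)) := by
        rw [← mul_assoc, CFC.sqrt_mul_sqrt_self T hT]
    _ = trAlong b (CFC.sqrt T * B * CFC.sqrt T) := hS.tsum_inner_comp_comm (hS.comp_clm b B)

theorem trAlong_mul_eq_tsum_norm_sq_sqrt (hT : 0 ≤ T) (hTb : Summable fun i => ⟪b i, T (b i)⟫)
    (hF : 0 ≤ F) :
    trAlong b (T * F) = (∑' i, ‖(CFC.sqrt F * CFC.sqrt T) (b i)‖ ^ 2 : ℝ) := by
  rw [trAlong_mul_eq_trAlong_sqrt_mul_mul_sqrt hT hTb, trAlong, Complex.ofReal_tsum]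
  simp only [mul_apply_eq_comp, ← inner_sqrt_apply_left, inner_apply_self_eq_norm_sqrt_apply_sq hF]

theorem trAlong_mul_eq_zero_iff (hT : 0 ≤ T) (hTb : Summable fun i => ⟪b i, T (b i)⟫)
    (hF : 0 ≤ F) : trAlong b (T * F) = 0 ↔ F * T = 0 := by
  constructor
  · intro h
    have hS : IsHilbertSchmidtAlong b (CFC.sqrt F * CFC.sqrt T) :=
      ((isHilbertSchmidtAlong_sqrt_iff hT).2 hTb).clm_comp _
    rw [trAlong_mul_eq_tsum_norm_sq_sqrt hT hTb hF, Complex.ofReal_eq_zero,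
      hS.tsum_norm_sq_eq_zero_iff] at h
    calc F * T = CFC.sqrt F * (CFC.sqrt F * CFC.sqrt T) * CFC.sqrt T := by
          simp only [mul_assoc, CFC.sqrt_mul_sqrt_self T hT]
          rw [← mul_assoc, CFC.sqrt_mul_sqrt_self F hF]
      _ = 0 := by rw [h, mul_zero, zero_mul]
  · intro h
    have h_swap : T * F = 0 := by
      simpa [(IsSelfAdjoint.of_nonneg hT).star_eq, (IsSelfAdjoint.of_nonneg hF).star_eq] using
        congrArg star h
    simp [h_swap, trAlong]

theorem trace_eq_one_iff_effect_fixes_state_general {E : H →L[ℂ] H} (hT : 0 ≤ T)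
    (hTb : Summable fun i => ⟪b i, T (b i)⟫) (hE : E ≤ 1) :
    trAlong b (T * E) = trAlong b T ↔ E * T = T := by
  have trace_complement : trAlong b (T * (1 - E)) = trAlong b T - trAlong b (T * E) := by
    simp only [trAlong, mul_sub, mul_one, sub_apply, inner_sub_right]
    exact hTb.tsum_sub (summable_inner_mul_of_nonneg hT hTb E)
  calc trAlong b (T * E) = trAlong b T ↔ trAlong b (T * (1 - E)) = 0 := by
        rw [trace_complement, sub_eq_zero, eq_comm]
    _ ↔ (1 - E) * T = 0 := trAlong_mul_eq_zero_iff hT hTb (sub_nonneg.2 hE)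
    _ ↔ E * T = T := by rw [sub_mul, one_mul, sub_eq_zero, eq_comm]

end PositiveTraceClass

/-- for a state operator `T` and an effect `E`,
`tr[TE] = 1` iff `E T = T`. -/
theorem trace_eq_one_iff_effect_fixes_state
    {H : Type*} [NormedAddCommGroup H] [InnerProductSpace ℂ H] [CompleteSpace H]
    {ι : Type*} [Countable ι] (b : HilbertBasis ι ℂ H)
    (T E : H →L[ℂ] H) (hT : IsStateOperator b T) (hE : IsEffect E) :
    trAlong b (T * E) = 1 ↔ E * T = T := by
  rw [← hT.2.2]
  exact trace_eq_one_iff_effect_fixes_state_general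
    ((ContinuousLinearMap.nonneg_iff_isPositive T).2 hT.1) hT.2.1 hE.2
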